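/- Every finite constructible graph is cop-win. -/

import Mathlib

universe u

/-- `y` dominates `x` in `G`: `y ≠ x` and the closed neighbourhood of `x` is contained
in the closed neighbourhood of `y`. -/
def Dominates {V : Type u} (G : SimpleGraph V) (y x : V) : Prop :=
  y ≠ x ∧ ∀ z : V, (z = x ∨ G.Adj x z) → (z = y ∨ G.Adj y z)

/-- `y` dominates `x` in the subgraph of `G` induced by `S`. -/
def DominatesOn {V : Type u} (G : SimpleGraph V) (S : Set V) (y x : V) : Prop :=
  y ≠ x ∧ ∀ z ∈ S, (z = x ∨ G.Adj x z) → (z = y ∨ G.Adj y z)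

/-- `r` (a well-order on `V`) is a construction order for `G`: every non-root vertex `x`
(i.e. one with a strictly earlier vertex) is dominated, in the subgraph induced by the
vertices up to and including `x`, by some strictly earlier vertex. -/
def ConstructionOrderSpec {V : Type u} (G : SimpleGraph V) (r : V → V → Prop) : Prop :=
  ∀ x : V, (∃ y, r y x) → ∃ y, r y x ∧ DominatesOn G {z | r z x ∨ z = x} y x

/-- A graph is constructible if it has a construction order. -/
def Constructible {V : Type u} (G : SimpleGraph V) : Prop :=
  ∃ r : V → V → Prop, IsWellOrder V r ∧ ConstructionOrderSpec G r

/-- Given a cop strategy `σ` (a function of the robber's history of positions) and a robber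
position sequence `r`, the cop's position at time `n`: the cop has seen the robber's first
`n` positions when making his `n`-th move. `copPos σ r 0 = σ []` is the cop's start. -/
def copPos {V : Type u} (σ : List V → V) (r : ℕ → V) (n : ℕ) : V :=
  σ (List.ofFn fun i : Fin n => r i.val)

/-- A cop strategy is legal if each successive position is equal or adjacent to the previous one. -/
def LegalCop {V : Type u} (G : SimpleGraph V) (σ : List V → V) : Prop :=
  ∀ l : List V, l ≠ [] → σ l = σ l.dropLast ∨ G.Adj (σ l.dropLast) (σ l)

/-- A legal robber position sequence: each move is to an adjacent vertex or staying put. -/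
def LegalRun {V : Type u} (G : SimpleGraph V) (r : ℕ → V) : Prop :=
  ∀ n : ℕ, r (n + 1) = r n ∨ G.Adj (r n) (r (n + 1))

/-- The cop catches the robber: at some time their positions coincide (either just after the
robber's move, or just after the cop's move). -/
def Caught {V : Type u} (σ : List V → V) (r : ℕ → V) : Prop :=
  ∃ n : ℕ, copPos σ r n = r n ∨ copPos σ r (n + 1) = r n

/-- `G` is cop-win: the cop has a legal strategy catching every legal robber play. -/
def CopWin {V : Type u} (G : SimpleGraph V) : Prop :=
  ∃ σ : List V → V, LegalCop G σ ∧ ∀ r : ℕ → V, LegalRun G r → Caught σ r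

/-- `G` is a weak cop win: the cop has a legal strategy guaranteeing that in every legal robber
play, either the robber is caught or the robber occupies each vertex at only finitely many times. -/
def WeakCopWin {V : Type u} (G : SimpleGraph V) : Prop :=
  ∃ σ : List V → V, LegalCop G σ ∧
    ∀ r : ℕ → V, LegalRun G r → Caught σ r ∨ ∀ v : V, {n : ℕ | r n = v}.Finite

open Classical in
/-- one retraction step: vertices of rank `m` are sent to their parent -/
noncomputable def stp {V : Type u} (e : V → ℕ) (p : V → V) (m : ℕ) (v : V) : V :=
  if e v = m then p v else v

/-- composite of the retractions of ranks `N, N-1, ..., N-j+1` -/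
noncomputable def retr {V : Type u} (e : V → ℕ) (p : V → V) (N : ℕ) : ℕ → V → V
  | 0, v => v
  | j + 1, v => stp e p (N - j) (retr e p N j v)

open Classical in
/-- the cop strategy on reversed histories -/
noncomputable def strat {V : Type u} (G : SimpleGraph V) (v0 : V) (R : ℕ → V → V) : List V → V
  | [] => v0
  | v :: l =>
    if R l.length v = strat G v0 R l ∨ G.Adj (strat G v0 R l) (R l.length v) then R l.length v
    else strat G v0 R l

theorem strat_legal {V : Type u} (G : SimpleGraph V) (v0 : V) (R : ℕ → V → V) :
    LegalCop G (fun l => strat G v0 R l.reverse) := by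
  intro l hl
  obtain ⟨l', a, rfl⟩ := List.eq_nil_or_concat l |>.resolve_left hl
  simp only [List.concat_eq_append, List.reverse_append, List.reverse_cons, List.reverse_nil,
    List.nil_append, List.singleton_append, List.dropLast_concat, strat]
  split_ifs with h
  · exact h
  · exact Or.inl rfl

theorem copPos_succ {V : Type u} (G : SimpleGraph V) (v0 : V) (R : ℕ → V → V) (r : ℕ → V) (n : ℕ)
    (h : R n (r n) = copPos (fun l => strat G v0 R l.reverse) r n ∨
      G.Adj (copPos (fun l => strat G v0 R l.reverse) r n) (R n (r n))) :
    copPos (fun l => strat G v0 R l.reverse) r (n + 1) = R n (r n) := by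
  unfold copPos at h ⊢
  rw [List.ofFn_succ_last]
  simp only [List.reverse_append, List.reverse_cons, List.reverse_nil,
    List.nil_append, List.singleton_append, strat, List.length_reverse, List.length_ofFn,
    Fin.val_last, Fin.val_castSucc]
  apply if_pos
  simpa only [List.length_reverse, List.length_ofFn] using h

theorem stp_adj {V : Type u} (G : SimpleGraph V) (e : V → ℕ) (p : V → V)
    (hp : ∀ x, 0 < e x → ∀ z, e z ≤ e x → (z = x ∨ G.Adj x z) → (z = p x ∨ G.Adj (p x) z))
    (m : ℕ) (hm : 0 < m) (a b : V) (hb : e b ≤ m) (h : b = a ∨ G.Adj a b) :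
    b = stp e p m a ∨ G.Adj (stp e p m a) b := by
  unfold stp
  split_ifs with h1
  · exact hp a (by omega) b (by omega) h
  · exact h

theorem stp_le {V : Type u} (e : V → ℕ) (p : V → V) (hlt : ∀ x, 0 < e x → e (p x) < e x)
    (m : ℕ) (a : V) (ha : e a ≤ m + 1) : e (stp e p (m + 1) a) ≤ m := by
  unfold stp
  split_ifs with h1
  · have := hlt a (by omega)
    omega
  · omega

theorem retr_le {V : Type u} (e : V → ℕ) (p : V → V) (hlt : ∀ x, 0 < e x → e (p x) < e x)
    (N : ℕ) (hN : ∀ x, e x ≤ N) (j : ℕ) (hj : j ≤ N) (v : V) : e (retr e p N j v) ≤ N - j := by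
  induction j with
  | zero => exact hN v
  | succ j ih =>
    have h := ih (by omega)
    simp only [retr]
    obtain ⟨m, hm⟩ : ∃ m, N - j = m + 1 := ⟨N - j - 1, by omega⟩
    rw [hm] at h ⊢
    have := stp_le e p hlt m _ h
    omega

theorem retr_adj {V : Type u} (G : SimpleGraph V) (e : V → ℕ) (p : V → V)
    (hlt : ∀ x, 0 < e x → e (p x) < e x)
    (hp : ∀ x, 0 < e x → ∀ z, e z ≤ e x → (z = x ∨ G.Adj x z) → (z = p x ∨ G.Adj (p x) z))
    (N : ℕ) (hN : ∀ x, e x ≤ N) (j : ℕ) (hj : j ≤ N) (v w : V) (h : w = v ∨ G.Adj v w) :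
    retr e p N j w = retr e p N j v ∨ G.Adj (retr e p N j v) (retr e p N j w) := by
  induction j with
  | zero => exact h
  | succ j ih =>
    have h := ih (by omega)
    have h1 := retr_le e p hlt N hN j (by omega) v
    have h2 := retr_le e p hlt N hN j (by omega) w
    simp only [retr]
    obtain ⟨m, hm⟩ : ∃ m, N - j = m + 1 := ⟨N - j - 1, by omega⟩
    rw [hm] at h1 h2 ⊢
    have h3 := stp_adj G e p hp (m + 1) (by omega) _ _ h2 h
    have h4 := stp_le e p hlt m _ h1
    have h5 := stp_adj G e p hp (m + 1) (by omega) _ _ (by omega : _ ≤ m + 1)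
      (h3.imp Eq.symm SimpleGraph.Adj.symm)
    exact h5.imp Eq.symm SimpleGraph.Adj.symm

theorem exists_rank {V : Type u} [Finite V] (r : V → V → Prop) (hr : IsWellOrder V r) :
    ∃ e : V → ℕ, (∀ x, 0 < e x → ∃ y, r y x) ∧ (∀ x y, r x y ↔ e x < e y) := by
  have mono : ∀ x y, r x y → {z | r z x}.ncard < {z | r z y}.ncard := by
    intro x y h
    apply Set.ncard_lt_ncard _ (Set.toFinite _)
    refine ⟨fun z hz => _root_.trans (r := r) hz h, fun hs => ?_⟩
    exact irrefl (r := r) x (hs h)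
  refine ⟨fun x => {z | r z x}.ncard, fun x hx => ?_, fun x y => ⟨mono x y, fun h => ?_⟩⟩
  · exact (Set.ncard_pos (Set.toFinite _)).1 hx
  · rcases trichotomous_of r x y with h1 | h1 | h1
    · exact h1
    · subst h1; exact absurd h (lt_irrefl _)
    · exact absurd h (mono _ _ h1).le.not_gt

theorem copWin_of_finite_constructible {V : Type u} [Finite V] [Nonempty V]
    (G : SimpleGraph V) (h : Constructible G) : CopWin G := by
  obtain ⟨r, hr, hc⟩ := h
  obtain ⟨e, he0, he⟩ := exists_rank r hr
  have inj : ∀ x y, e x = e y → x = y := by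
    intro x y hxy
    rcases trichotomous_of r x y with h1 | h1 | h1
    · rw [he] at h1; omega
    · exact h1
    · rw [he] at h1; omega
  have hpar : ∀ x, ∃ y, 0 < e x → (e y < e x ∧
      ∀ z, e z ≤ e x → (z = x ∨ G.Adj x z) → (z = y ∨ G.Adj y z)) := by
    intro x
    by_cases hx : 0 < e x
    · obtain ⟨y, hy, hd⟩ := hc x (he0 x hx)
      refine ⟨y, fun _ => ⟨(he _ _).1 hy, fun z hz => hd.2 z ?_⟩⟩
      rcases hz.lt_or_eq with h1 | h1
      · exact Or.inl ((he _ _).2 h1)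
      · exact Or.inr (inj _ _ h1)
    · exact ⟨x, fun h => absurd h hx⟩
  choose p hp' using hpar
  have hlt : ∀ x, 0 < e x → e (p x) < e x := fun x hx => (hp' x hx).1
  have hp := fun x hx => (hp' x hx).2
  obtain ⟨N, hN⟩ : ∃ N, ∀ x, e x ≤ N := by
    obtain ⟨N, hN⟩ := (Set.finite_range e).bddAbove
    exact ⟨N, fun x => hN ⟨x, rfl⟩⟩
  let v0 : V := retr e p N N (Classical.arbitrary V)
  let R : ℕ → V → V := fun n v => retr e p N (N - n) v
  refine ⟨fun l => strat G v0 R l.reverse, strat_legal G v0 R, fun s hs => ?_⟩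
  have key : ∀ n, n ≤ N → copPos (fun l => strat G v0 R l.reverse) s (n + 1) = R n (s n) := by
    intro n
    induction n with
    | zero =>
      intro _
      apply copPos_succ
      left
      have h1 := retr_le e p hlt N hN N le_rfl (s 0)
      have h2 := retr_le e p hlt N hN N le_rfl (Classical.arbitrary V)
      have : copPos (fun l => strat G v0 R l.reverse) s 0 = v0 := by simp [copPos, strat]
      rw [this]
      apply inj
      change e (retr e p N N (s 0)) = e (retr e p N N (Classical.arbitrary V))
      omega
    | succ n ih =>
      intro hn
      apply copPos_succ
      rw [ih (by omega)]
      change retr e p N (N - (n + 1)) _ = retr e p N (N - n) _ ∨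
        G.Adj (retr e p N (N - n) _) (retr e p N (N - (n + 1)) _)
      have hj : N - n = (N - (n + 1)) + 1 := by omega
      rw [hj]
      have h1 := retr_adj G e p hlt hp N hN (N - (n + 1)) (by omega) _ _ (hs n)
      have h2 := retr_le e p hlt N hN (N - (n + 1)) (by omega) (s (n + 1))
      exact stp_adj G e p hp _ (by omega) _ _ h2 h1
  refine ⟨N, Or.inr ?_⟩
  rw [key N le_rfl]
  simp [R, retr]
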